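/- If G₁ and G₂ are cospectral graphs (on the same number m of vertices, with equal characteristic polynomials) and H is any graph, then the coronas G₁∘H and G₂∘H are cospectral: f_{G₁∘H}(λ) = f_{G₂∘H}(λ). -/

import Mathlib

open Matrix Polynomial

/-- The characteristic matrix `λ I - B` of `B`, over the field `ℂ(λ)` of rational functions. -/
noncomputable def charMatRatFunc {V : Type*} [Fintype V] [DecidableEq V]
    (B : Matrix V V ℂ) : Matrix V V (RatFunc ℂ) :=
  Matrix.scalar V (RatFunc.X : RatFunc ℂ) - B.map (algebraMap ℂ (RatFunc ℂ))

/-- The coronal of a matrix `B`: the sum of the entries of `(λ I - B)⁻¹` over `ℂ(λ)`. -/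
noncomputable def coronal {V : Type*} [Fintype V] [DecidableEq V]
    (B : Matrix V V ℂ) : RatFunc ℂ :=
  ∑ i, ∑ j, (charMatRatFunc B)⁻¹ i j

/-- The adjacency matrix of the corona `G ∘ H`. -/
def coronaMatrix {α β : Type*} (A : Matrix α α ℂ) (B : Matrix β β ℂ)
    [DecidableEq α] :
    Matrix (α ⊕ β × α) (α ⊕ β × α) ℂ :=
  Matrix.fromBlocks A
    (Matrix.of fun i p => if i = p.2 then 1 else 0)
    (Matrix.of fun p j => if p.2 = j then 1 else 0)
    (Matrix.of fun p q => if p.2 = q.2 then B p.1 q.1 else 0)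


/-!
Over the field `ℂ(λ)` the matrix `λ I - B` is invertible, because its determinant is the nonzero
polynomial `f_B`. The Schur complement of the block `(λ I - B) ⊗ I` in `λ I - A ∘ B` is
`(λ - χ_B(λ)) I - A`, with `χ_B` the coronal of `B`. Hence
`f_{A ∘ B}(λ) = f_B(λ) ^ m * f_A(λ - χ_B(λ))`, where `m` is the size of `A`, and this depends
on `A` only through `f_A`.
-/

/-- The block row `uᵀ ⊗ I`, the Kronecker product of the row vector `uᵀ` with the identity matrix of
size `α`, with rows indexed by `α` rather than by `Unit × α`. For `u = 1` it is the upper right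
block of `coronaMatrix`. -/
def rowKroneckerOne {R : Type*} [Zero R] {β : Type*} (α : Type*) [DecidableEq α] (u : β → R) :
    Matrix α (β × α) R :=
  Matrix.of fun i p => if i = p.2 then u p.1 else 0

section RowKroneckerOne

open scoped Kronecker

variable {R α β γ : Type*} [Fintype α] [DecidableEq α] [Fintype β]

lemma rowKroneckerOne_mul_kronecker_one [Semiring R] (u : β → R) (E : Matrix β γ R) :
    rowKroneckerOne α u * (E ⊗ₖ (1 : Matrix α α R)) = rowKroneckerOne α (u ᵥ* E) := by
  ext i ⟨b, j⟩
  by_cases hij : i = j <;>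
    simp [rowKroneckerOne, mul_apply, vecMul, dotProduct, Fintype.sum_prod_type, one_apply, hij]

lemma rowKroneckerOne_mul_transpose [Semiring R] (u v : β → R) :
    rowKroneckerOne α u * (rowKroneckerOne α v)ᵀ = scalar α (u ⬝ᵥ v) := by
  ext i j
  rw [scalar_apply, diagonal_apply]
  by_cases hij : i = j <;>
    simp [rowKroneckerOne, mul_apply, dotProduct, Fintype.sum_prod_type, hij]

lemma det_fromBlocks_rowKroneckerOne [CommRing R] [DecidableEq β] (M : Matrix α α R)
    (u v : β → R) {E : Matrix β β R} (hE : IsUnit E.det) :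
    (fromBlocks M (rowKroneckerOne α u) (rowKroneckerOne α v)ᵀ (E ⊗ₖ (1 : Matrix α α R))).det =
      E.det ^ Fintype.card α * (M - scalar α (u ᵥ* E⁻¹ ⬝ᵥ v)).det := by
  have det_kronecker_one : (E ⊗ₖ (1 : Matrix α α R)).det = E.det ^ Fintype.card α := by
    rw [det_kronecker, det_one, one_pow, mul_one]
  let _ : Invertible (E ⊗ₖ (1 : Matrix α α R)) :=
    invertibleOfIsUnitDet _ (det_kronecker_one ▸ hE.pow _)
  rw [det_fromBlocks₂₂, invOf_eq_nonsing_inv, inv_kronecker, inv_one,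
    rowKroneckerOne_mul_kronecker_one, rowKroneckerOne_mul_transpose, det_kronecker_one]

end RowKroneckerOne

lemma aeval_charpoly_eq_det {R S V : Type*} [CommRing R] [CommRing S] [Algebra R S] [Fintype V]
    [DecidableEq V] (A : Matrix V V R) (x : S) :
    aeval x A.charpoly = (scalar V x - A.map (algebraMap R S)).det := by
  rw [← eval_map_algebraMap, ← charpoly_map, eval_charpoly]

section Coronal

variable {V : Type*} [Fintype V] [DecidableEq V] (B : Matrix V V ℂ)

lemma det_charMatRatFunc :
    (charMatRatFunc B).det = algebraMap ℂ[X] (RatFunc ℂ) B.charpoly := by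
  rw [charMatRatFunc, ← aeval_charpoly_eq_det, RatFunc.aeval_X_left_eq_algebraMap]

lemma isUnit_det_charMatRatFunc : IsUnit (charMatRatFunc B).det := by
  rw [det_charMatRatFunc, isUnit_iff_ne_zero]
  exact RatFunc.algebraMap_ne_zero B.charpoly_monic.ne_zero

lemma coronal_eq_vecMul_dotProduct : coronal B = 1 ᵥ* (charMatRatFunc B)⁻¹ ⬝ᵥ 1 := by
  rw [← dotProduct_mulVec, one_dotProduct]
  simp [coronal, mulVec, dotProduct]

end Coronal

section Corona

open scoped Kronecker

variable {α β : Type*} [Fintype α] [DecidableEq α] [Fintype β] [DecidableEq β]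

lemma charMatRatFunc_coronaMatrix (A : Matrix α α ℂ) (B : Matrix β β ℂ) :
    charMatRatFunc (coronaMatrix A B) =
      fromBlocks (charMatRatFunc A) (rowKroneckerOne α (-1)) (rowKroneckerOne α (-1))ᵀ
        (charMatRatFunc B ⊗ₖ 1) := by
  ext (i | ⟨b, i⟩) (j | ⟨c, j⟩)
  · simp [charMatRatFunc, coronaMatrix, diagonal_apply]
  · by_cases hij : i = j <;> simp [charMatRatFunc, coronaMatrix, rowKroneckerOne, hij]
  · by_cases hij : i = j <;> simp [charMatRatFunc, coronaMatrix, rowKroneckerOne, hij, eq_comm]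
  · by_cases hij : i = j <;> simp [charMatRatFunc, coronaMatrix, diagonal_apply, hij]

theorem charpoly_coronaMatrix (A : Matrix α α ℂ) (B : Matrix β β ℂ) :
    algebraMap ℂ[X] (RatFunc ℂ) (coronaMatrix A B).charpoly =
      algebraMap ℂ[X] (RatFunc ℂ) B.charpoly ^ Fintype.card α *
        aeval (RatFunc.X - coronal B) A.charpoly := by
  have schur_complement : charMatRatFunc A - scalar α (coronal B) =
      scalar α (RatFunc.X - coronal B) - A.map (algebraMap ℂ (RatFunc ℂ)) := by
    rw [charMatRatFunc, map_sub, sub_right_comm]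
  have coronal_eq : (-1) ᵥ* (charMatRatFunc B)⁻¹ ⬝ᵥ (-1) = coronal B := by
    rw [neg_vecMul, neg_dotProduct_neg, coronal_eq_vecMul_dotProduct]
  calc algebraMap ℂ[X] (RatFunc ℂ) (coronaMatrix A B).charpoly
      = (charMatRatFunc (coronaMatrix A B)).det := (det_charMatRatFunc _).symm
    _ = (charMatRatFunc B).det ^ Fintype.card α *
          (charMatRatFunc A - scalar α (coronal B)).det := by
        rw [charMatRatFunc_coronaMatrix,
          det_fromBlocks_rowKroneckerOne _ _ _ (isUnit_det_charMatRatFunc B), coronal_eq]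
    _ = algebraMap ℂ[X] (RatFunc ℂ) B.charpoly ^ Fintype.card α *
          aeval (RatFunc.X - coronal B) A.charpoly := by
        rw [det_charMatRatFunc, schur_complement, aeval_charpoly_eq_det]

end Corona

theorem corona_cospectral_left_general {α₁ α₂ β : Type*} [Fintype α₁] [DecidableEq α₁]
    [Fintype α₂] [DecidableEq α₂] [Fintype β] [DecidableEq β]
    {A₁ : Matrix α₁ α₁ ℂ} {A₂ : Matrix α₂ α₂ ℂ} (B : Matrix β β ℂ)
    (hcospec : A₁.charpoly = A₂.charpoly) :
    (coronaMatrix A₁ B).charpoly = (coronaMatrix A₂ B).charpoly := by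
  have card_eq : Fintype.card α₁ = Fintype.card α₂ := by
    rw [← charpoly_natDegree_eq_dim A₁, hcospec, charpoly_natDegree_eq_dim]
  apply RatFunc.algebraMap_injective ℂ
  rw [charpoly_coronaMatrix, charpoly_coronaMatrix, hcospec, card_eq]

/-- If `G₁` and `G₂` are cospectral then `G₁ ∘ H` and `G₂ ∘ H` are cospectral, for any `H`. -/
theorem corona_cospectral_left {m n : ℕ} (G₁ G₂ : SimpleGraph (Fin m))
    (H : SimpleGraph (Fin n)) [DecidableRel G₁.Adj] [DecidableRel G₂.Adj] [DecidableRel H.Adj]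
    (hcospec : (G₁.adjMatrix ℂ).charpoly = (G₂.adjMatrix ℂ).charpoly) :
    (coronaMatrix (G₁.adjMatrix ℂ) (H.adjMatrix ℂ)).charpoly =
      (coronaMatrix (G₂.adjMatrix ℂ) (H.adjMatrix ℂ)).charpoly :=
  corona_cospectral_left_general (H.adjMatrix ℂ) hcospec
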